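/- arXiv:2508.15177 — 2 statements merged into one kernel-verified Lean document; each statement's English description precedes it below -/
import Mathlib

section
/- For every n ≥ 1 and every m ∈ {1, 2}, every K_m-K_n graph is word-representable. -/
/-- Two distinct letters `x` and `y` alternate in the word `w` if the subsequence of `w`
formed by all occurrences of `x` and `y` has no two equal consecutive letters. -/
def Alternates {V : Type*} [DecidableEq V] (w : List V) (x y : V) : Prop :=
  (w.filter (fun z => decide (z = x ∨ z = y))).Chain' (· ≠ ·)

/-- A graph `G` is word-representable if there is a word over its vertex set, in which
every vertex occurs, such that two distinct vertices alternate in the word iff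
they are adjacent in `G`. -/
def WordRepresentable {V : Type*} [DecidableEq V] (G : SimpleGraph V) : Prop :=
  ∃ w : List V, (∀ v : V, v ∈ w) ∧
    ∀ x y : V, x ≠ y → (Alternates w x y ↔ G.Adj x y)

/-- `G` is a `K_m`-`K_n` graph: its vertex set can be partitioned into a set `A` of size
`m` and a set `B` of size `n`, each inducing a clique, such that no vertex of `B` is
adjacent to every vertex of `A`. -/
def IsKmKn {V : Type*} [Fintype V] [DecidableEq V] (G : SimpleGraph V) (m n : ℕ) : Prop :=
  ∃ A B : Finset V, A ∪ B = Finset.univ ∧ Disjoint A B ∧ A.card = m ∧ B.card = n ∧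
    G.IsClique (A : Set V) ∧ G.IsClique (B : Set V) ∧
    ∀ b ∈ B, ∃ a ∈ A, ¬ G.Adj b a

/-!
A permutation graph, in which two vertices are adjacent iff two given linear orders agree on them,
is represented by the word that lists the vertices in the first order and then in the second:
`x` and `y` alternate in `xyxy` but not in `xyyx`. If all vertices but `a` and `b` form a clique,
the graph is a permutation graph: order the clique so that its vertices not adjacent to `a` form an
interval, and likewise for `b`; then `a` is put before its interval in one order and after it in the
other, and so is `b`.
-/

section Words

variable {V α β : Type*} [LinearOrder α] [LinearOrder β]

lemma exists_list_pairwise_lt_of_injective [Finite V] {k : V → α} (hk : k.Injective) :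
    ∃ L : List V, (∀ v, v ∈ L) ∧ L.Pairwise (k · < k ·) := by
  cases nonempty_fintype V
  let _ := LinearOrder.lift' k hk
  exact ⟨Finset.univ.sort, by simp, (Finset.sortedLT_sort _).pairwise⟩

variable [DecidableEq V]

lemma filter_eq_pair_of_pairwise {r : V → V → Prop} [Std.Asymm r] {L : List V} {x y : V}
    (hL : L.Pairwise r) (hx : x ∈ L) (hy : y ∈ L) (hxy : r x y) :
    L.filter (fun z => decide (z = x ∨ z = y)) = [x, y] := by
  have ne_of_rel {u v : V} (h : r u v) : u ≠ v := by
    rintro rfl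
    exact asymm h h
  have hperm : (L.filter (fun z => decide (z = x ∨ z = y))).Perm [x, y] := by
    refine (List.perm_ext_iff_of_nodup ((hL.imp ne_of_rel).filter _)
      (by simpa using ne_of_rel hxy)).2 fun z => ?_
    grind
  exact hperm.eq_of_pairwise (fun _ _ _ _ h h' => (asymm h h').elim)
    (hL.filter _) (by simpa using hxy)

lemma alternates_comm {w : List V} {x y : V} : Alternates w x y ↔ Alternates w y x := by
  simp only [Alternates, or_comm]

lemma alternates_append_iff {k : V → α} {l : V → β} {K L : List V} {x y : V}
    (hK : K.Pairwise (k · < k ·)) (hL : L.Pairwise (l · < l ·))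
    (hxK : x ∈ K) (hyK : y ∈ K) (hxL : x ∈ L) (hyL : y ∈ L) (hk : k x ≠ k y) (hl : l x ≠ l y) :
    Alternates (K ++ L) x y ↔ (k x < k y ↔ l x < l y) := by
  wlog hlt : k x < k y generalizing x y
  · have hgt : k y < k x := hk.lt_or_gt.resolve_left hlt
    rw [alternates_comm, this hyK hxK hyL hxL hk.symm hl.symm hgt]
    simp only [hgt, hlt, true_iff, false_iff, not_lt, hl.symm.le_iff_lt]
  have hne : x ≠ y := fun h => hk (congrArg k h)
  have : Std.Asymm (k · < k ·) := ⟨fun _ _ => lt_asymm⟩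
  have : Std.Asymm (l · < l ·) := ⟨fun _ _ => lt_asymm⟩
  rw [Alternates, List.filter_append, filter_eq_pair_of_pairwise hK hxK hyK hlt]
  change List.IsChain _ _ ↔ _
  rcases hl.lt_or_gt with hlt' | hgt'
  · rw [filter_eq_pair_of_pairwise hL hxL hyL hlt']
    simp [hlt, hlt', hne, hne.symm]
  · have hfilter : L.filter (fun z => decide (z = x ∨ z = y)) = [y, x] := by
      simpa only [or_comm] using filter_eq_pair_of_pairwise hL hyL hxL hgt'
    rw [hfilter]
    simp [hlt, hgt'.not_gt]

end Words

/-- `G` is a permutation graph: its vertices can be placed in the plane so that two of them are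
adjacent iff their positions are comparable in the product order. In the usual definition adjacent
vertices are the inverted pairs of a permutation; the two agree after reversing one coordinate.
Positions may coincide, so that vertices need not be put in general position. -/
def IsPermutationGraph {V : Type*} (G : SimpleGraph V) : Prop :=
  ∃ p : V → ℕ × ℕ, ∀ x y, x ≠ y → (G.Adj x y ↔ p x ≤ p y ∨ p y ≤ p x)

-- If `s < t`, both comparisons hold, since a tie in the leading coordinate is broken by the other
-- one; if `s = t`, both compare `i` and `j`; if `s` and `t` are incomparable, exactly one holds.
lemma toLex_lt_iff_toLex_swap_lt_iff {α β ι : Type*} [LinearOrder α] [LinearOrder β]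
    [LinearOrder ι] {s t : α × β} {i j : ι} (hij : i ≠ j) :
    (toLex (toLex s, i) < toLex (toLex t, j) ↔
      toLex (toLex s.swap, i) < toLex (toLex t.swap, j)) ↔ s ≤ t ∨ t ≤ s := by
  have := hij.lt_or_gt
  simp only [Prod.Lex.toLex_lt_toLex, Prod.le_def, toLex_inj, Prod.ext_iff, Prod.fst_swap,
    Prod.snd_swap]
  grind

theorem IsPermutationGraph.wordRepresentable {V : Type*} [Finite V] [DecidableEq V]
    {G : SimpleGraph V} (hG : IsPermutationGraph G) : WordRepresentable G := by
  obtain ⟨p, hp⟩ := hG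
  obtain ⟨n, ⟨e⟩⟩ := Finite.exists_equiv_fin V
  let k (v : V) := toLex (toLex (p v), e v)
  let l (v : V) := toLex (toLex (p v).swap, e v)
  have hk : k.Injective := fun x y h => e.injective (congrArg (fun q => (ofLex q).2) h)
  have hl : l.Injective := fun x y h => e.injective (congrArg (fun q => (ofLex q).2) h)
  obtain ⟨K, mem_K, hK⟩ := exists_list_pairwise_lt_of_injective hk
  obtain ⟨L, mem_L, hL⟩ := exists_list_pairwise_lt_of_injective hl
  refine ⟨K ++ L, fun v => List.mem_append_left _ (mem_K v), fun x y hxy => ?_⟩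
  calc Alternates (K ++ L) x y
    _ ↔ (k x < k y ↔ l x < l y) := alternates_append_iff hK hL (mem_K x) (mem_K y) (mem_L x)
        (mem_L y) (hk.ne hxy) (hl.ne hxy)
    _ ↔ p x ≤ p y ∨ p y ≤ p x := toLex_lt_iff_toLex_swap_lt_iff (e.injective.ne hxy)
    _ ↔ G.Adj x y := (hp x y hxy).symm

theorem isPermutationGraph_of_isClique_compl_pair {V : Type*} {G : SimpleGraph V} {a b : V}
    (hG : G.IsClique {a, b}ᶜ) : IsPermutationGraph G := by
  classical
  -- The point `(i, j)` is incomparable to exactly the diagonal points strictly between `i` and `j`.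
  -- Placing the clique on the diagonal by `d` makes the interval from `1` to `5` contain exactly
  -- the non-neighbours of `a`, and the interval from `3` to `7` those of `b`. The order of the two
  -- ends is free; for `b` it decides whether the points of `a` and `b` are comparable.
  let d (v : V) : ℕ :=
    if G.Adj a v then if G.Adj b v then 0 else 6 else if G.Adj b v then 2 else 4
  let pb : ℕ × ℕ := if G.Adj a b then (7, 3) else (3, 7)
  let p (v : V) : ℕ × ℕ := if v = a then (5, 1) else if v = b then pb else (d v, d v)
  have adj_a (v : V) : G.Adj a v ↔ (5, 1) ≤ (d v, d v) ∨ (d v, d v) ≤ (5, 1) := by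
    simp only [d, Prod.mk_le_mk]
    grind
  have adj_b (v : V) : G.Adj b v ↔ pb ≤ (d v, d v) ∨ (d v, d v) ≤ pb := by
    simp only [d, pb, Prod.le_def]
    grind
  have adj_ab : G.Adj a b ↔ (5, 1) ≤ pb ∨ pb ≤ (5, 1) := by
    simp only [pb]
    split_ifs with h <;> simp [h]
  have adj_clique {x y : V} (hx : x ∉ ({a, b} : Set V)) (hy : y ∉ ({a, b} : Set V)) (hxy : x ≠ y) :
      G.Adj x y ↔ (d x, d x) ≤ (d y, d y) ∨ (d y, d y) ≤ (d x, d x) := by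
    simpa only [Prod.mk_le_mk, and_self, le_total, iff_true] using hG hx hy hxy
  refine ⟨p, fun x y hxy => ?_⟩
  have := G.adj_comm x y
  simp only [p]
  grind

theorem stmt5_general {V : Type*} [Finite V] [DecidableEq V] (G : SimpleGraph V) (a b : V)
    (hG : G.IsClique {a, b}ᶜ) : WordRepresentable G :=
  (isPermutationGraph_of_isClique_compl_pair hG).wordRepresentable

lemma IsKmKn.exists_isClique_compl_pair {V : Type*} [Fintype V] [DecidableEq V]
    {G : SimpleGraph V} {m n : ℕ} (h : IsKmKn G m n) (hm : m = 1 ∨ m = 2) :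
    ∃ a b : V, G.IsClique {a, b}ᶜ := by
  obtain ⟨A, B, hAB, -, hA, -, -, hB, -⟩ := h
  have hcompl : G.IsClique (A : Set V)ᶜ := by
    refine hB.subset fun v hv => ?_
    have : v ∈ A ∪ B := hAB ▸ Finset.mem_univ v
    exact (Finset.mem_union.1 this).resolve_left hv
  rcases hm with rfl | rfl
  · obtain ⟨a, rfl⟩ := Finset.card_eq_one.1 hA
    exact ⟨a, a, by simpa using hcompl⟩
  · obtain ⟨a, b, -, rfl⟩ := Finset.card_eq_two.1 hA
    exact ⟨a, b, by simpa using hcompl⟩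

/-- For every `n ≥ 1` and every `m ∈ {1, 2}`, every `K_m`-`K_n` graph is
word-representable. -/
theorem stmt5 {V : Type*} [Fintype V] [DecidableEq V] (G : SimpleGraph V)
    (m n : ℕ) (hm : m = 1 ∨ m = 2) (hn : 1 ≤ n) (h : IsKmKn G m n) :
    WordRepresentable G := by
  obtain ⟨a, b, hab⟩ := h.exists_isClique_compl_pair hm
  exact stmt5_general G a b hab
end

section
/- For every n ≥ 1, a K_3-K_n graph is word-representable if and only if it does not contain the graph A_3 as an induced subgraph. -/
/-- `G` contains `H` as an induced subgraph. -/
def ContainsInducedCopy {V W : Type*} (G : SimpleGraph V) (H : SimpleGraph W) : Prop :=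
  ∃ f : W → V, Function.Injective f ∧ ∀ a b, H.Adj a b ↔ G.Adj (f a) (f b)

/-- The graph `A₃` on vertices `{1,…,7}` (represented by `Fin 7`, with vertex `i`
of the paper corresponding to `i - 1` here): a clique on `{1,2,3,4}` together with the
edges `{1,5},{2,5},{1,6},{3,6},{2,7},{3,7},{5,6},{5,7},{6,7}`. -/
def A3 : SimpleGraph (Fin 7) :=
  SimpleGraph.fromRel (fun a b => (a, b) ∈
    ([(0,1),(0,2),(0,3),(1,2),(1,3),(2,3),
      (0,4),(1,4),(0,5),(2,5),(1,6),(2,6),(4,5),(4,6),(5,6)] : List (Fin 7 × Fin 7)))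

/-!
Let a letter precede another if it is never behind it in occurrences while a word is read. In a
word representing `G` this is a partial order in which the ends of an edge are comparable and a
vertex strictly between them is adjacent to both. In `A₃` order the triangle `1, 2, 3` as
`p₀ < p₁ < p₂`. An outer vertex adjacent to both ends of an edge, but not to some vertex strictly
between them, is itself strictly between them, and hence so is every other common neighbour of the
ends which it misses. The outer vertex missing `p₁` thus forces vertex `4` between `p₀` and `p₂`;
then vertex `4` lies between two consecutive `pᵢ`, and the outer vertex missing the third one
forces that third one between them as well, which is absurd.

Conversely, vertices of `B` with the same neighbours in `A` are interchangeable, so `G` is a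
blow-up of a graph with one vertex per neighbour type, and a word for `G` arises by expanding each
letter of a word for that graph. The full type never occurs. If the empty type or one of the three
types of size two is missing as well, an explicit word for the remaining types suffices; if all
four occur, vertices of these types together with `A` form `A₃`.
-/

section PrefixOrder

variable {V : Type*} [DecidableEq V] {w : List V} {x y z : V}

/-- `x` leads `y` in the word `w` if no prefix of `w` has more occurrences of `y` than of `x`.
On the letters of `w` this is a partial order, with leading letters smaller. -/
def Leads (w : List V) (x y : V) : Prop :=
  ∀ l, l <+: w → l.count y ≤ l.count x

/-- `x` and `y` alternate in `w` with `x` first, expressed by occurrence counts in prefixes: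
the count of `x` is always the count of `y` or one more. -/
def AlternatesFrom (w : List V) (x y : V) : Prop :=
  ∀ l, l <+: w → l.count y ≤ l.count x ∧ l.count x ≤ l.count y + 1

theorem AlternatesFrom.leads (h : AlternatesFrom w x y) : Leads w x y :=
  fun l hl => (h l hl).1

theorem Leads.trans (hxy : Leads w x y) (hyz : Leads w y z) : Leads w x z :=
  fun l hl => (hyz l hl).trans (hxy l hl)

theorem Leads.antisymm (hx : x ∈ w) (hxy : Leads w x y) (hyx : Leads w y x) : x = y := by
  by_contra hne
  obtain ⟨l, r, rfl⟩ := List.append_of_mem hx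
  have hbefore : l.count y ≤ l.count x := hxy l (by simp)
  have hafter : (l ++ [x]).count x ≤ (l ++ [x]).count y := hyx (l ++ [x]) (by simp)
  simp only [List.count_append, List.count_singleton_self,
    List.count_singleton, beq_iff_eq, hne, if_false] at hafter
  omega

theorem AlternatesFrom.of_leads (h : AlternatesFrom w x z) (hxy : Leads w x y)
    (hyz : Leads w y z) : AlternatesFrom w x y ∧ AlternatesFrom w y z := by
  refine ⟨fun l hl => ?_, fun l hl => ?_⟩ <;>
    have := h l hl <;> have := hxy l hl <;> have := hyz l hl <;> omega

/-- The partial order in which `x ≤ y` means that `x` leads `y` in `w`. -/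
abbrev leadsPartialOrder (w : List V) (hw : ∀ v, v ∈ w) : PartialOrder V where
  le := Leads w
  le_refl _ _ _ := le_rfl
  le_trans _ _ _ := Leads.trans
  le_antisymm x _ := Leads.antisymm (hw x)

theorem alternatesFrom_cons_left (hxy : x ≠ y) :
    AlternatesFrom (x :: w) x y ↔ AlternatesFrom w y x := by
  simp only [AlternatesFrom, List.prefix_cons_iff]
  refine ⟨fun h l hl => ?_, ?_⟩
  · have := h (x :: l) (.inr ⟨l, rfl, hl⟩)
    rw [List.count_cons_self, List.count_cons_of_ne hxy] at this
    omega
  · rintro h _ (rfl | ⟨l, rfl, hl⟩)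
    · simp
    · have := h l hl
      rw [List.count_cons_self, List.count_cons_of_ne hxy]
      omega

theorem not_alternatesFrom_cons_right (hxy : x ≠ y) : ¬ AlternatesFrom (y :: w) x y := by
  intro h
  have := (h [y] (by simp)).1
  simp [hxy.symm] at this

theorem alternatesFrom_cons_of_ne (hx : z ≠ x) (hy : z ≠ y) :
    AlternatesFrom (z :: w) x y ↔ AlternatesFrom w x y := by
  simp only [AlternatesFrom, List.prefix_cons_iff]
  refine ⟨fun h l hl => ?_, ?_⟩
  · have := h (z :: l) (.inr ⟨l, rfl, hl⟩)
    rwa [List.count_cons_of_ne hx, List.count_cons_of_ne hy] at this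
  · rintro h _ (rfl | ⟨l, rfl, hl⟩)
    · simp
    · rw [List.count_cons_of_ne hx, List.count_cons_of_ne hy]
      exact h l hl

theorem alternatesFrom_iff_isChain (hxy : x ≠ y) :
    AlternatesFrom w x y ↔ (y :: w.filter fun z => decide (z = x ∨ z = y)).IsChain (· ≠ ·) := by
  induction w generalizing x y with
  | nil => simp [AlternatesFrom]
  | cons z w ih =>
    by_cases hx : z = x
    · subst hx
      rw [alternatesFrom_cons_left hxy, ih hxy.symm]
      simp [hxy.symm, or_comm]
    by_cases hy : z = y
    · subst hy
      simp [not_alternatesFrom_cons_right hxy]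
    · rw [alternatesFrom_cons_of_ne hx hy, ih hxy]
      simp [hx, hy]

theorem alternates_iff_alternatesFrom_or (hxy : x ≠ y) :
    Alternates w x y ↔ AlternatesFrom w x y ∨ AlternatesFrom w y x := by
  have hmem : ∀ z ∈ w.filter (fun z => decide (z = x ∨ z = y)), z = x ∨ z = y :=
    fun z hz => of_decide_eq_true (List.mem_filter.1 hz).2
  rw [alternatesFrom_iff_isChain hxy, alternatesFrom_iff_isChain hxy.symm]
  simp only [or_comm (b := _ = x)]
  change List.IsChain _ _ ↔ _
  generalize w.filter (fun z => decide (z = x ∨ z = y)) = u at hmem ⊢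
  cases u with
  | nil => simp
  | cons z u =>
    rcases hmem z List.mem_cons_self with rfl | rfl
    · simp [hxy.symm]
    · simp [hxy]

end PrefixOrder

theorem injective_of_pairwise_adj {V ι : Type*} {G : SimpleGraph V} {p : ι → V}
    (hp : Pairwise fun i j => G.Adj (p i) (p j)) : Function.Injective p :=
  fun _ _ hij => by_contra fun hne => (hp hne).ne hij

theorem adj_iff_ne_of_pairwise {V ι : Type*} {G : SimpleGraph V} {p : ι → V}
    (hp : Pairwise fun i j => G.Adj (p i) (p j)) {i j : ι} : G.Adj (p i) (p j) ↔ i ≠ j :=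
  ⟨fun h hij => G.irrefl (hij ▸ h), fun h => hp h⟩

section SemiTransitive

variable {V : Type*} {G : SimpleGraph V}

/-- Order form of a semi-transitive orientation of `G`, each edge being directed upwards: the
ends of an edge are comparable, and a vertex strictly between them is adjacent to both. -/
structure IsSemiTransitive [PartialOrder V] (G : SimpleGraph V) : Prop where
  le_or_ge_of_adj : ∀ {x y}, G.Adj x y → x ≤ y ∨ y ≤ x
  adj_of_mem_Ioo : ∀ {x y z}, G.Adj x z → y ∈ Set.Ioo x z → G.Adj x y ∧ G.Adj y z

theorem exists_isSemiTransitive_of_wordRepresentable [DecidableEq V]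
    (h : WordRepresentable G) : ∃ _ : PartialOrder V, IsSemiTransitive G := by
  obtain ⟨w, hw, hG⟩ := h
  let := leadsPartialOrder w hw
  have adj_of_alternatesFrom {x y : V} (hxy : x ≠ y) (h : AlternatesFrom w x y) : G.Adj x y :=
    (hG x y hxy).1 ((alternates_iff_alternatesFrom_or hxy).2 (.inl h))
  have alternatesFrom_of_adj {x y : V} (h : G.Adj x y) :
      AlternatesFrom w x y ∨ AlternatesFrom w y x :=
    (alternates_iff_alternatesFrom_or h.ne).1 ((hG x y h.ne).2 h)
  refine ⟨inferInstance, fun h => ?_, fun {x y z} h hy => ?_⟩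
  · exact (alternatesFrom_of_adj h).imp AlternatesFrom.leads AlternatesFrom.leads
  · have hxz : AlternatesFrom w x z := (alternatesFrom_of_adj h).resolve_right
      fun hzx => (hy.1.trans hy.2).not_ge hzx.leads
    obtain ⟨hxy, hyz⟩ := hxz.of_leads hy.1.le hy.2.le
    exact ⟨adj_of_alternatesFrom hy.1.ne hxy, adj_of_alternatesFrom hy.2.ne hyz⟩

theorem exists_perm_strictMono [PartialOrder V] {n : ℕ} {p : Fin n → V}
    (hp : Function.Injective p) (hcomp : ∀ i j, p i ≤ p j ∨ p j ≤ p i) :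
    ∃ σ : Equiv.Perm (Fin n), StrictMono (p ∘ σ) := by
  let σ := Tuple.sort (toLinearExtension ∘ p)
  have hσ : Monotone (toLinearExtension ∘ p ∘ σ) := Tuple.monotone_sort (toLinearExtension ∘ p)
  refine ⟨σ, fun i j hij => ?_⟩
  have hne : p (σ i) ≠ p (σ j) := (hp.comp σ.injective).ne hij.ne
  refine lt_of_le_of_ne ((hcomp _ _).resolve_right fun hji => hne ?_) hne
  exact le_antisymm (α := LinearExtension V) (hσ hij.le) (toLinearExtension.monotone hji)

namespace IsSemiTransitive

variable [PartialOrder V]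

theorem mem_Ioo_of_not_adj (h : IsSemiTransitive G) {p q m u : V} (hm : m ∈ Set.Ioo p q)
    (hup : G.Adj u p) (huq : G.Adj u q) (hum : ¬ G.Adj u m) : u ∈ Set.Ioo p q := by
  have hpu : ¬ u ≤ p := fun hle =>
    hum (h.adj_of_mem_Ioo huq ⟨hle.trans_lt hm.1, hm.2⟩).1
  have hqu : ¬ q ≤ u := fun hle =>
    hum (h.adj_of_mem_Ioo hup.symm ⟨hm.1, hm.2.trans_le hle⟩).2.symm
  exact ⟨lt_of_le_of_ne ((h.le_or_ge_of_adj hup).resolve_left hpu) hup.ne',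
    lt_of_le_of_ne ((h.le_or_ge_of_adj huq).resolve_right hqu) huq.ne⟩

theorem mem_Ioo_of_common_nonneighbor (h : IsSemiTransitive G) {p q m m' u : V}
    (hm : m ∈ Set.Ioo p q) (hup : G.Adj u p) (huq : G.Adj u q) (hum : ¬ G.Adj u m)
    (hmp : G.Adj m' p) (hmq : G.Adj m' q) (hum' : ¬ G.Adj u m') : m' ∈ Set.Ioo p q :=
  h.mem_Ioo_of_not_adj (h.mem_Ioo_of_not_adj hm hup huq hum) hmp hmq fun hadj => hum' hadj.symm

theorem false_of_strictMono (h : IsSemiTransitive G) {p q : Fin 3 → V} {d : V}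
    (hmono : StrictMono p) (hp : Pairwise fun i j => G.Adj (p i) (p j))
    (hd : ∀ i, G.Adj d (p i)) (hq : ∀ i j, G.Adj (q i) (p j) ↔ i ≠ j)
    (hqd : ∀ i, ¬ G.Adj (q i) d) : False := by
  have h01 : p 0 < p 1 := hmono (by decide)
  have h12 : p 1 < p 2 := hmono (by decide)
  have hd02 : d ∈ Set.Ioo (p 0) (p 2) :=
    h.mem_Ioo_of_common_nonneighbor (u := q 1) ⟨h01, h12⟩ (by simp [hq]) (by simp [hq])
      (by simp [hq]) (hd 0) (hd 2) (hqd 1)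
  rcases h.le_or_ge_of_adj (hd 1) with hle | hle
  · have hd01 : d ∈ Set.Ioo (p 0) (p 1) := ⟨hd02.1, hle.lt_of_ne (hd 1).ne⟩
    have h2 : p 2 ∈ Set.Ioo (p 0) (p 1) :=
      h.mem_Ioo_of_common_nonneighbor (u := q 2) hd01 (by simp [hq]) (by simp [hq])
        (hqd 2) (hp (by decide)) (hp (by decide)) (by simp [hq])
    exact h2.2.asymm h12
  · have hd12 : d ∈ Set.Ioo (p 1) (p 2) := ⟨hle.lt_of_ne (hd 1).ne', hd02.2⟩
    have h0 : p 0 ∈ Set.Ioo (p 1) (p 2) :=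
      h.mem_Ioo_of_common_nonneighbor (u := q 0) hd12 (by simp [hq]) (by simp [hq])
        (hqd 0) (hp (by decide)) (hp (by decide)) (by simp [hq])
    exact h0.1.asymm h01

end IsSemiTransitive

theorem not_wordRepresentable_of_triangle [DecidableEq V] {p q : Fin 3 → V} {d : V}
    (hp : Pairwise fun i j => G.Adj (p i) (p j)) (hd : ∀ i, G.Adj d (p i))
    (hq : ∀ i j, G.Adj (q i) (p j) ↔ i ≠ j) (hqd : ∀ i, ¬ G.Adj (q i) d) :
    ¬ WordRepresentable G := by
  intro hG
  obtain ⟨_, h⟩ := exists_isSemiTransitive_of_wordRepresentable hG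
  have hcomp (i j : Fin 3) : p i ≤ p j ∨ p j ≤ p i := by
    rcases eq_or_ne i j with rfl | hne
    · exact .inl le_rfl
    · exact h.le_or_ge_of_adj (hp hne)
  obtain ⟨σ, hσ⟩ := exists_perm_strictMono (injective_of_pairwise_adj hp) hcomp
  exact h.false_of_strictMono (q := q ∘ σ) hσ (fun i j hij => hp (σ.injective.ne hij))
    (fun i => hd (σ i)) (fun i j => by simp [hq]) fun i => hqd (σ i)

end SemiTransitive

instance : DecidableRel A3.Adj := fun i j => inferInstanceAs (Decidable (i ≠ j ∧ (_ ∨ _)))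

theorem containsInducedCopy_A3_iff {V : Type*} {G : SimpleGraph V} :
    ContainsInducedCopy G A3 ↔ ∃ (p q : Fin 3 → V) (d : V),
      (Pairwise fun i j => G.Adj (p i) (p j)) ∧ (Pairwise fun i j => G.Adj (q i) (q j)) ∧
      (∀ i, G.Adj d (p i)) ∧ (∀ i j, G.Adj (q i) (p j) ↔ i ≠ j) ∧ ∀ i, ¬ G.Adj (q i) d := by
  constructor
  · rintro ⟨f, -, hf⟩
    refine ⟨f ∘ ![0, 1, 2], f ∘ ![6, 5, 4], f 3, ?_⟩
    simp only [Pairwise, Function.comp_apply, ← hf]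
    decide
  · rintro ⟨p, q, d, hp, hq, hd, hqp, hqd⟩
    have hadj : ∀ i j, A3.Adj i j ↔ G.Adj (![p 0, p 1, p 2, d, q 2, q 1, q 0] i)
        (![p 0, p 1, p 2, d, q 2, q 1, q 0] j) := by
      have hpd (i : Fin 3) : G.Adj (p i) d := (hd i).symm
      have hpq (i j : Fin 3) : G.Adj (p i) (q j) ↔ j ≠ i := (G.adj_comm _ _).trans (hqp j i)
      have hdq (i : Fin 3) : ¬ G.Adj d (q i) := fun h => hqd i h.symm
      intro i j
      fin_cases i <;> fin_cases j <;> simp [A3, adj_iff_ne_of_pairwise hp,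
        adj_iff_ne_of_pairwise hq, hd, hpd, hqp, hpq, hqd, hdq]
    have htwin : ∀ i j, (∀ k, A3.Adj i k ↔ A3.Adj j k) → i = j := by decide
    exact ⟨_, fun i j hij => htwin i j fun k => by rw [hadj, hadj, hij], hadj⟩

theorem not_wordRepresentable_of_containsInducedCopy_A3 {V : Type*} [DecidableEq V]
    {G : SimpleGraph V} (h : ContainsInducedCopy G A3) : ¬ WordRepresentable G := by
  obtain ⟨p, q, d, hp, -, hd, hqp, hqd⟩ := containsInducedCopy_A3_iff.1 h
  exact not_wordRepresentable_of_triangle hp hd hqp hqd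

theorem flatMap_ite_eq {V T : Type*} [DecidableEq T] (W : List T) (s : T) (L : List V) :
    (W.flatMap fun t => if t = s then L else []) = (List.replicate (W.count s) L).flatten := by
  induction W with
  | nil => simp
  | cons t W ih => by_cases ht : t = s <;> simp [ht, ih, List.replicate_succ]

theorem isChain_ne_flatten_replicate_pair {V : Type*} {x y : V} (hxy : x ≠ y) (n : ℕ) :
    (List.replicate n [x, y]).flatten.IsChain (· ≠ ·) := by
  have hjoin : (List.replicate n [x, y]).IsChain
      fun l₁ l₂ => ∀ a ∈ l₁.getLast?, ∀ b ∈ l₂.head?, a ≠ b :=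
    List.isChain_replicate_of_rel _ (by simp [hxy.symm])
  refine (List.isChain_flatten (by simp)).2 ⟨fun l hl => ?_, hjoin⟩
  simp [List.eq_of_mem_replicate hl, hxy]

section BlowUp

variable {V T : Type*} [Fintype V] [DecidableEq T] {φ : V → T} {W : List T} {x y : V}

/-- The word obtained from `W` by replacing each letter `t` by a fixed enumeration of the fibre
of `φ` over `t`. -/
noncomputable def blowUp (φ : V → T) (W : List T) : List V :=
  W.flatMap fun t => (Finset.univ.filter fun v => φ v = t).toList

theorem mem_blowUp : x ∈ blowUp φ W ↔ φ x ∈ W := by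
  simp [blowUp]

variable [DecidableEq V]

theorem filter_fiber_perm (φ : V → T) (hxy : x ≠ y) (t : T) :
    ((Finset.univ.filter fun v => φ v = t).toList.filter fun z => decide (z = x ∨ z = y)).Perm
      ([x, y].filter fun v => decide (φ v = t)) := by
  refine (List.perm_ext_iff_of_nodup ((Finset.nodup_toList _).filter _)
    (List.Nodup.filter _ (by simpa))).2 fun z => ?_
  simp [and_comm]

theorem alternates_blowUp_of_eq (hxy : x ≠ y) (h : φ x = φ y) :
    Alternates (blowUp φ W) x y := by
  obtain ⟨a, b, hab, hpair⟩ : ∃ a b, a ≠ b ∧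
      (Finset.univ.filter fun v => φ v = φ x).toList.filter
        (fun z => decide (z = x ∨ z = y)) = [a, b] := by
    have hperm := filter_fiber_perm φ hxy (φ x)
    rw [List.filter_eq_self (l := [x, y]).2 (by simp [h])] at hperm
    rcases List.perm_pair.1 hperm with hpair | hpair
    exacts [⟨x, y, hxy, hpair⟩, ⟨y, x, hxy.symm, hpair⟩]
  have hfiber (t : T) : (Finset.univ.filter fun v => φ v = t).toList.filter
      (fun z => decide (z = x ∨ z = y)) = if t = φ x then [a, b] else [] := by
    split_ifs with ht
    · rw [ht, hpair]
    · refine List.Perm.eq_nil ((filter_fiber_perm φ hxy t).trans ?_)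
      simp [← h, Ne.symm ht]
  change List.IsChain _ _
  simp only [blowUp, List.filter_flatMap, hfiber, flatMap_ite_eq]
  exact isChain_ne_flatten_replicate_pair hab _

theorem map_filter_blowUp (h : φ x ≠ φ y) :
    ((blowUp φ W).filter fun z => decide (z = x ∨ z = y)).map φ =
      W.filter fun t => decide (t = φ x ∨ t = φ y) := by
  have hfiber (t : T) : ((Finset.univ.filter fun v => φ v = t).toList.filter
      (fun z => decide (z = x ∨ z = y))).map φ =
        [t].filter fun t => decide (t = φ x ∨ t = φ y) := by
    have hperm := (filter_fiber_perm φ (ne_of_apply_ne φ h) t).map φ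
    by_cases hx : t = φ x
    · simpa [hx, h.symm] using hperm
    by_cases hy : t = φ y
    · simpa [hy, h] using hperm
    · simpa [hx, hy, Ne.symm hx, Ne.symm hy] using hperm
  simp only [blowUp, List.filter_flatMap, List.map_flatMap, hfiber]
  rw [← List.filter_flatMap, List.flatMap_singleton']

theorem alternates_blowUp_iff (h : φ x ≠ φ y) :
    Alternates (blowUp φ W) x y ↔ Alternates W (φ x) (φ y) := by
  change List.IsChain _ _ ↔ List.IsChain _ _
  rw [← map_filter_blowUp h, List.isChain_map]
  refine List.IsChain.iff_of_mem_imp fun a b ha hb => ?_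
  simp only [List.mem_filter, decide_eq_true_eq] at ha hb
  rcases ha.2 with rfl | rfl <;> rcases hb.2 with rfl | rfl <;>
    simp [h, h.symm, ne_of_apply_ne φ h, (ne_of_apply_ne φ h).symm]

end BlowUp

/-- `w` represents the subgraph of `G` induced on the letters of `w`. -/
def Represents {V : Type*} [DecidableEq V] (w : List V) (G : SimpleGraph V) : Prop :=
  ∀ x ∈ w, ∀ y ∈ w, x ≠ y → (Alternates w x y ↔ G.Adj x y)

theorem Represents.wordRepresentable_of_blowUp {V T : Type*} [Finite V] [DecidableEq V]
    [DecidableEq T] {G : SimpleGraph V} {H : SimpleGraph T} {W : List T} (hW : Represents W H)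
    (φ : V → T) (hφ : ∀ v, φ v ∈ W)
    (hG : ∀ x y, x ≠ y → (G.Adj x y ↔ φ x = φ y ∨ H.Adj (φ x) (φ y))) : WordRepresentable G := by
  have := Fintype.ofFinite V
  refine ⟨blowUp φ W, fun v => mem_blowUp.2 (hφ v), fun x y hxy => ?_⟩
  by_cases h : φ x = φ y
  · simp [alternates_blowUp_of_eq, hG, hxy, h]
  · rw [alternates_blowUp_iff h, hW _ (hφ x) _ (hφ y) h, hG x y hxy, or_iff_right h]

section TypeGraph

/-- The universal two-clique graph over `ι`: one clique is `ι`, the other has one vertex `s` for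
each possible neighbourhood `s ⊆ ι` in the first. -/
def typeGraph (ι : Type*) : SimpleGraph (ι ⊕ Finset ι) where
  Adj
    | .inl i, .inl j => i ≠ j
    | .inr s, .inr t => s ≠ t
    | .inl i, .inr s | .inr s, .inl i => i ∈ s
  symm := ⟨by rintro (i | s) (j | t) h <;> first | exact h.symm | exact h⟩
  loopless := ⟨by rintro (i | s) h <;> exact h rfl⟩

variable {ι V : Type*} {G : SimpleGraph V} {a : ι → V}

instance [DecidableEq ι] : DecidableRel (typeGraph ι).Adj
  | .inl i, .inl j => inferInstanceAs (Decidable (i ≠ j))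
  | .inr s, .inr t => inferInstanceAs (Decidable (s ≠ t))
  | .inl i, .inr s | .inr s, .inl i => inferInstanceAs (Decidable (i ∈ s))

open Classical in
/-- The set of indices `i` such that `v` is adjacent to `a i`. -/
noncomputable def neighborType [Fintype ι] (G : SimpleGraph V) (a : ι → V) (v : V) : Finset ι :=
  Finset.univ.filter fun i => G.Adj v (a i)

open Classical in
/-- The vertex of `typeGraph ι` to which `v` corresponds: its index if it belongs to the clique
enumerated by `a`, and its neighbour type otherwise. -/
noncomputable def typeLetter [Fintype ι] (G : SimpleGraph V) (a : ι → V) (v : V) : ι ⊕ Finset ι :=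
  if h : v ∈ Set.range a then .inl h.choose else .inr (neighborType G a v)

variable [Fintype ι]

theorem mem_neighborType {v : V} {i : ι} : i ∈ neighborType G a v ↔ G.Adj v (a i) := by
  simp [neighborType]

theorem typeLetter_apply (ha : Function.Injective a) (i : ι) : typeLetter G a (a i) = .inl i := by
  have h : a i ∈ Set.range a := Set.mem_range_self i
  rw [typeLetter, dif_pos h, ha h.choose_spec]

theorem typeLetter_of_notMem {v : V} (hv : v ∉ Set.range a) :
    typeLetter G a v = .inr (neighborType G a v) :=
  dif_neg hv

theorem adj_iff_typeLetter (ha : Pairwise fun i j => G.Adj (a i) (a j))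
    (hB : G.IsClique (Set.range a)ᶜ) {x y : V} (hxy : x ≠ y) :
    G.Adj x y ↔ typeLetter G a x = typeLetter G a y ∨
      (typeGraph ι).Adj (typeLetter G a x) (typeLetter G a y) := by
  have hinj := injective_of_pairwise_adj ha
  by_cases hx : x ∈ Set.range a <;> by_cases hy : y ∈ Set.range a
  · obtain ⟨i, rfl⟩ := hx
    obtain ⟨j, rfl⟩ := hy
    simp [typeLetter_apply hinj, typeGraph, adj_iff_ne_of_pairwise ha, ne_of_apply_ne a hxy]
  · obtain ⟨i, rfl⟩ := hx
    simp [typeLetter_apply hinj, typeLetter_of_notMem hy, typeGraph, mem_neighborType, G.adj_comm]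
  · obtain ⟨j, rfl⟩ := hy
    simp [typeLetter_apply hinj, typeLetter_of_notMem hx, typeGraph, mem_neighborType]
  · simpa [typeLetter_of_notMem hx, typeLetter_of_notMem hy, typeGraph, em] using hB hx hy hxy

theorem Represents.wordRepresentable_of_typeGraph [Finite V] [DecidableEq V] [DecidableEq ι]
    {W : List (ι ⊕ Finset ι)} (hW : Represents W (typeGraph ι))
    (ha : Pairwise fun i j => G.Adj (a i) (a j)) (hB : G.IsClique (Set.range a)ᶜ)
    (hι : ∀ i, .inl i ∈ W) (htype : ∀ v ∉ Set.range a, .inr (neighborType G a v) ∈ W) :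
    WordRepresentable G := by
  refine hW.wordRepresentable_of_blowUp (typeLetter G a) (fun v => ?_)
    fun x y hxy => adj_iff_typeLetter ha hB hxy
  by_cases hv : v ∈ Set.range a
  · obtain ⟨i, rfl⟩ := hv
    exact typeLetter_apply (G := G) (injective_of_pairwise_adj ha) i ▸ hι i
  · exact typeLetter_of_notMem hv ▸ htype v hv

end TypeGraph

instance {V : Type*} [DecidableEq V] (w : List V) (x y : V) : Decidable (Alternates w x y) :=
  inferInstanceAs (Decidable (List.IsChain _ _))

instance {V : Type*} [DecidableEq V] (w : List V) (G : SimpleGraph V) [DecidableRel G.Adj] :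
    Decidable (Represents w G) :=
  inferInstanceAs (Decidable (∀ x ∈ w, ∀ y ∈ w, x ≠ y → (Alternates w x y ↔ G.Adj x y)))

/-- A word representing `typeGraph (Fin 3)` without the neighbour types `∅` and `univ`. -/
def wordOmittingEmpty : List (Fin 3 ⊕ Finset (Fin 3)) :=
  [.inl 1, .inr {0, 1}, .inr {1}, .inl 2, .inr {1, 2}, .inr {2}, .inl 0, .inl 1, .inr {0, 2},
    .inl 2, .inr {0}, .inr {0, 1}, .inl 0, .inr {1}, .inr {1, 2}, .inl 1]

/-- A word representing `typeGraph (Fin 3)` without the neighbour types `{i}ᶜ` and `univ`. Indices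
are taken modulo 3, so `{i, i + 1}` and `{i, i + 2}` are the two pairs that occur. -/
def wordOmittingPair (i : Fin 3) : List (Fin 3 ⊕ Finset (Fin 3)) :=
  [.inl (i + 2), .inr {i, i + 2}, .inr {i + 2}, .inr ∅, .inl (i + 1), .inr {i + 1}, .inl i,
    .inl (i + 2), .inr {i, i + 1}, .inl (i + 1), .inr {i}, .inr {i, i + 2}, .inl i,
    .inr {i + 2}, .inl (i + 2)]

theorem represents_wordOmittingEmpty : Represents wordOmittingEmpty (typeGraph (Fin 3)) := by
  decide +kernel

theorem represents_wordOmittingPair (i : Fin 3) :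
    Represents (wordOmittingPair i) (typeGraph (Fin 3)) := by
  decide +kernel +revert

theorem inl_mem_wordOmittingEmpty (i : Fin 3) : .inl i ∈ wordOmittingEmpty := by
  fin_cases i <;> simp [wordOmittingEmpty]

theorem inr_mem_wordOmittingEmpty_iff {s : Finset (Fin 3)} :
    .inr s ∈ wordOmittingEmpty ↔ s ≠ ∅ ∧ s ≠ Finset.univ := by
  simp only [wordOmittingEmpty, List.mem_cons, List.not_mem_nil, Sum.inr.injEq, reduceCtorEq]
  decide +revert

theorem inl_mem_wordOmittingPair (i j : Fin 3) : .inl j ∈ wordOmittingPair i := by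
  simp only [wordOmittingPair, List.mem_cons, List.not_mem_nil, Sum.inl.injEq, reduceCtorEq]
  decide +revert

theorem inr_mem_wordOmittingPair_iff {i : Fin 3} {s : Finset (Fin 3)} :
    .inr s ∈ wordOmittingPair i ↔ s ≠ {i}ᶜ ∧ s ≠ Finset.univ := by
  simp only [wordOmittingPair, List.mem_cons, List.not_mem_nil, Sum.inr.injEq, reduceCtorEq]
  decide +revert

theorem IsKmKn.exists_enumeration {V : Type*} [Fintype V] [DecidableEq V] {G : SimpleGraph V}
    {m n : ℕ} (h : IsKmKn G m n) :
    ∃ a : Fin m → V, (Pairwise fun i j => G.Adj (a i) (a j)) ∧ G.IsClique (Set.range a)ᶜ ∧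
      ∀ v ∉ Set.range a, neighborType G a v ≠ Finset.univ := by
  obtain ⟨A, B, hAB, -, hcard, -, hA, hB, hno⟩ := h
  let e := A.equivFinOfCardEq hcard
  have hrange : Set.range (fun i => (e.symm i : V)) = A := by
    simp [Set.range_comp' Subtype.val e.symm]
  have hmemB {v : V} (hv : v ∉ A) : v ∈ B :=
    (Finset.mem_union.1 (hAB ▸ Finset.mem_univ v)).resolve_left hv
  refine ⟨fun i => e.symm i, fun i j hij => ?_, ?_, fun v hv htype => ?_⟩
  · exact hA (e.symm i).2 (e.symm j).2 fun h => hij (e.symm.injective (Subtype.ext h))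
  · rw [hrange]
    exact hB.subset fun v hv => hmemB hv
  · rw [hrange] at hv
    obtain ⟨u, hu, hvu⟩ := hno v (hmemB hv)
    have hmem := mem_neighborType.1 (htype ▸ Finset.mem_univ (e ⟨u, hu⟩))
    exact hvu (by simpa using hmem)

theorem containsInducedCopy_A3_of_neighborType {V : Type*} {G : SimpleGraph V} {a : Fin 3 → V}
    (ha : Pairwise fun i j => G.Adj (a i) (a j)) (hB : G.IsClique (Set.range a)ᶜ)
    {d : V} (hd : d ∉ Set.range a) (hdtype : neighborType G a d = ∅)
    {x : Fin 3 → V} (hx : ∀ i, x i ∉ Set.range a) (hxtype : ∀ i, neighborType G a (x i) = {i}ᶜ) :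
    ContainsInducedCopy G A3 := by
  have hne_of_type {u v : V} (h : neighborType G a u ≠ neighborType G a v) : u ≠ v :=
    ne_of_apply_ne _ h
  refine containsInducedCopy_A3_iff.2 ⟨x, a, d, fun i j hij => ?_, ha, fun i => ?_, fun i j => ?_,
    fun i => ?_⟩
  · exact hB (hx i) (hx j) (hne_of_type (by simpa [hxtype] using hij))
  · refine hB hd (hx i) (hne_of_type ?_)
    rw [hdtype, hxtype]
    decide +revert
  · rw [G.adj_comm, ← mem_neighborType, hxtype]
    simp
  · rw [G.adj_comm, ← mem_neighborType, hdtype]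
    simp

/-- For every `n ≥ 1`, a `K₃`-`K_n` graph is word-representable if and only if it does
not contain the graph `A₃` as an induced subgraph. -/
theorem stmt9 {V : Type*} [Fintype V] [DecidableEq V] (G : SimpleGraph V)
    (n : ℕ) (hn : 1 ≤ n) (h : IsKmKn G 3 n) :
    WordRepresentable G ↔ ¬ ContainsInducedCopy G A3 := by
  refine ⟨fun hG hA3 => not_wordRepresentable_of_containsInducedCopy_A3 hA3 hG, fun hA3 => ?_⟩
  obtain ⟨a, ha, hB, hfull⟩ := h.exists_enumeration
  by_cases hempty : ∀ v ∉ Set.range a, neighborType G a v ≠ ∅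
  · exact represents_wordOmittingEmpty.wordRepresentable_of_typeGraph ha hB
      inl_mem_wordOmittingEmpty
      fun v hv => inr_mem_wordOmittingEmpty_iff.2 ⟨hempty v hv, hfull v hv⟩
  by_cases hpair : ∃ i, ∀ v ∉ Set.range a, neighborType G a v ≠ {i}ᶜ
  · obtain ⟨i, hi⟩ := hpair
    exact (represents_wordOmittingPair i).wordRepresentable_of_typeGraph ha hB
      (inl_mem_wordOmittingPair i)
      fun v hv => inr_mem_wordOmittingPair_iff.2 ⟨hi v hv, hfull v hv⟩
  push Not at hempty hpair
  obtain ⟨d, hd, hdtype⟩ := hempty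
  choose x hx hxtype using hpair
  exact absurd (containsInducedCopy_A3_of_neighborType ha hB hd hdtype hx hxtype) hA3
end
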